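/- arXiv:1009.2944 — 2 statements merged into one kernel-verified Lean document; each statement's English description precedes it below -/
import Mathlib

section
/- Let n be an integer and let q be a prime dividing g(n). Let 0 < η < 1 with η ≤ η₃(q/4), and let (γ_j) be the uniform g-sequence of parameter η (γ_0 = 0, γ_j = (1 + η·γ_{j−1}²)/2 for j ≥ 1). Then for every integer k ≥ 1 with θ(q·γ_{k+1})/q − k·(log q)/q > 0, one has q ≤ (log g(n)) / ( θ(q·γ_{k+1})/q − k·(log q)/q ). -/
/-- Landau's function: the maximal order of a permutation of the symmetric group on `n` letters. -/
noncomputable def landau (n : ℕ) : ℕ :=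
  Finset.univ.sup fun σ : Equiv.Perm (Fin n) => orderOf σ

/-- The largest prime factor of `m` (0 if `m` has no prime factor). -/
def maxPrimeFac (m : ℕ) : ℕ := m.primeFactors.sup id

/-- Chebyshev's function θ(x) = Σ_{p ≤ x, p prime} log p. -/
noncomputable def chebTheta (x : ℝ) : ℝ :=
  ∑ p ∈ Finset.filter Nat.Prime (Finset.range (⌊x⌋₊ + 1)), Real.log p

/-- η_k(x) = min{ p_{i−k}/p_i : p_i > x }. -/
noncomputable def eta (k : ℕ) (x : ℝ) : ℝ :=
  sInf {r : ℝ | ∃ i : ℕ, x < (Nat.nth Nat.Prime (i + k) : ℝ) ∧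
    r = (Nat.nth Nat.Prime i : ℝ) / (Nat.nth Nat.Prime (i + k) : ℝ)}

/-- Sum of the prime powers exactly dividing `m`. -/
def ell (m : ℕ) : ℕ := ∑ p ∈ m.primeFactors, p ^ m.factorization p

theorem ell_coprime {a b : ℕ} (ha : a ≠ 0) (hb : b ≠ 0) (h : a.Coprime b) :
    ell (a * b) = ell a + ell b := by
  unfold ell
  rw [h.primeFactors_mul, Finset.sum_union h.disjoint_primeFactors]
  congr 1
  · apply Finset.sum_congr rfl
    intro p hp
    have : b.factorization p = 0 := by
      apply Nat.factorization_eq_zero_of_not_dvd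
      intro hd
      exact Finset.disjoint_left.mp h.disjoint_primeFactors hp
        (Nat.mem_primeFactors.mpr ⟨Nat.prime_of_mem_primeFactors hp, hd, hb⟩)
    rw [Nat.factorization_mul ha hb, Finsupp.add_apply, this, add_zero]
  · apply Finset.sum_congr rfl
    intro p hp
    have : a.factorization p = 0 := by
      apply Nat.factorization_eq_zero_of_not_dvd
      intro hd
      exact Finset.disjoint_right.mp h.disjoint_primeFactors hp
        (Nat.mem_primeFactors.mpr ⟨Nat.prime_of_mem_primeFactors hp, hd, ha⟩)
    rw [Nat.factorization_mul ha hb, Finsupp.add_apply, this, zero_add]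

theorem ell_one : ell 1 = 0 := by simp [ell]

theorem ell_prime_pow {p a : ℕ} (hp : p.Prime) (ha : a ≠ 0) : ell (p ^ a) = p ^ a := by
  unfold ell
  rw [Nat.primeFactors_prime_pow ha hp, Finset.sum_singleton, hp.factorization_pow]
  simp

theorem ell_le (m : ℕ) (hm : m ≠ 0) : ell m ≤ m := by
  induction m using Nat.recOnPosPrimePosCoprime with
  | prime_pow p n hp hn => rw [ell_prime_pow hp hn.ne']
  | zero => exact absurd rfl hm
  | one => simp [ell_one]
  | coprime a b ha hb hab iha ihb =>
    rw [ell_coprime (by omega) (by omega) hab]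
    have h1 := iha (by omega)
    have h2 := ihb (by omega)
    nlinarith

theorem ell_lcm_le {a b : ℕ} (ha : a ≠ 0) (hb : b ≠ 0) : ell (a.lcm b) ≤ ell a + ell b := by
  unfold ell
  have h : (a.lcm b).primeFactors = a.primeFactors ∪ b.primeFactors := by
    ext p
    simp only [Nat.mem_primeFactors, Finset.mem_union]
    constructor
    · rintro ⟨hp, hd, -⟩
      rcases (hp.dvd_lcm).mp hd with h | h
      · exact Or.inl ⟨hp, h, ha⟩
      · exact Or.inr ⟨hp, h, hb⟩
    · rintro (⟨hp, hd, -⟩ | ⟨hp, hd, -⟩)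
      · exact ⟨hp, hd.trans (Nat.dvd_lcm_left a b), Nat.lcm_ne_zero ha hb⟩
      · exact ⟨hp, hd.trans (Nat.dvd_lcm_right a b), Nat.lcm_ne_zero ha hb⟩
  rw [h, Nat.factorization_lcm ha hb]
  have e1 : ∑ p ∈ a.primeFactors, p ^ a.factorization p =
      ∑ p ∈ a.primeFactors ∪ b.primeFactors,
        if p ∈ a.primeFactors then p ^ a.factorization p else 0 := by
    rw [← Finset.sum_filter]
    congr 1
    ext p; simp only [Finset.mem_filter, Finset.mem_union]; tauto
  have e2 : ∑ p ∈ b.primeFactors, p ^ b.factorization p =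
      ∑ p ∈ a.primeFactors ∪ b.primeFactors,
        if p ∈ b.primeFactors then p ^ b.factorization p else 0 := by
    rw [← Finset.sum_filter]
    congr 1
    ext p; simp only [Finset.mem_filter, Finset.mem_union]; tauto
  rw [e1, e2, ← Finset.sum_add_distrib]
  apply Finset.sum_le_sum
  intro p hp
  have hpp : p.Prime := by
    rcases Finset.mem_union.mp hp with h | h <;> exact Nat.prime_of_mem_primeFactors h
  rw [Finsupp.sup_apply]
  by_cases h1 : p ∈ a.primeFactors <;> by_cases h2 : p ∈ b.primeFactors
  · simp only [h1, h2, if_true]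
    rcases le_total (a.factorization p) (b.factorization p) with h | h
    · rw [sup_eq_right.mpr h]; omega
    · rw [sup_eq_left.mpr h]; omega
  · have : b.factorization p = 0 := by
      rw [← Nat.support_factorization] at h2; exact Finsupp.notMem_support_iff.mp h2
    simp [h1, h2, this]
  · have : a.factorization p = 0 := by
      rw [← Nat.support_factorization] at h1; exact Finsupp.notMem_support_iff.mp h1
    simp [h1, h2, this]
  · simp only [Finset.mem_union] at hp; tauto

theorem ell_multiset (s : Multiset ℕ) (hs : ∀ a ∈ s, 2 ≤ a) :
    s.lcm ≠ 0 ∧ ell s.lcm ≤ s.sum := by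
  induction s using Multiset.induction_on with
  | empty => simp [ell_one]
  | cons a s ih =>
    have ⟨h1, h2⟩ := ih (fun b hb => hs b (Multiset.mem_cons_of_mem hb))
    have ha := hs a (Multiset.mem_cons_self a s)
    rw [Multiset.lcm_cons, Multiset.sum_cons]
    have hl : GCDMonoid.lcm a s.lcm = Nat.lcm a s.lcm := rfl
    rw [hl]
    refine ⟨Nat.lcm_ne_zero (by omega) h1, ?_⟩
    have := ell_lcm_le (a := a) (by omega) h1
    have := ell_le a (by omega)
    omega

theorem landau_spec (n : ℕ) : landau n ≠ 0 ∧ ell (landau n) ≤ n := by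
  obtain ⟨σ, -, h⟩ := Finset.exists_mem_eq_sup (Finset.univ : Finset (Equiv.Perm (Fin n)))
    Finset.univ_nonempty (fun σ => orderOf σ)
  have h' : landau n = orderOf σ := h
  have := ell_multiset σ.cycleType (fun a ha => Equiv.Perm.two_le_of_mem_cycleType ha)
  rw [h', ← Equiv.Perm.lcm_cycleType]
  refine ⟨this.1, this.2.trans ?_⟩
  have := Equiv.Perm.sum_cycleType_le σ
  simpa using this

theorem le_landau (n m : ℕ) (hm : m ≠ 0) (h : ell m ≤ n) : m ≤ landau n := by
  have : ∃ σ : Equiv.Perm (Fin n),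
      σ.cycleType = m.primeFactors.val.map (fun p => p ^ m.factorization p) := by
    rw [Equiv.Perm.exists_with_cycleType_iff]
    refine ⟨by simpa [ell] using h, ?_⟩
    intro a ha
    obtain ⟨p, hp, rfl⟩ := Multiset.mem_map.mp ha
    have hp' : p ∈ m.primeFactors := hp
    have hpp := Nat.prime_of_mem_primeFactors hp'
    have : m.factorization p ≠ 0 := by
      rw [← Nat.support_factorization] at hp'; exact Finsupp.mem_support_iff.mp hp'
    exact hpp.two_le.trans (Nat.le_self_pow this p)
  obtain ⟨σ, hσ⟩ := this
  have hd : m ∣ orderOf σ := by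
    rw [← Equiv.Perm.lcm_cycleType, hσ]
    conv_lhs => rw [← Nat.prod_factorization_pow_eq_self hm]
    rw [Finsupp.prod, Nat.support_factorization]
    apply Finset.prod_dvd_of_isRelPrime
    · intro p hp r hr hpr
      have hp1 := Nat.prime_of_mem_primeFactors hp
      have hr1 := Nat.prime_of_mem_primeFactors hr
      exact Nat.coprime_iff_isRelPrime.mp (Nat.Coprime.pow _ _ ((Nat.coprime_primes hp1 hr1).mpr hpr))
    · intro p hp
      apply Multiset.dvd_lcm
      exact Multiset.mem_map.mpr ⟨p, hp, rfl⟩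
  have h1 : m ≤ orderOf σ := Nat.le_of_dvd (orderOf_pos σ) hd
  exact h1.trans (Finset.le_sup (f := fun σ : Equiv.Perm (Fin n) => orderOf σ) (Finset.mem_univ σ))

theorem ell_div {m q : ℕ} (hm : m ≠ 0) (hq : q.Prime) (hd : q ∣ m) :
    ell (m / q) + q ≤ ell m := by
  obtain ⟨a, c, hc, rfl⟩ := Nat.exists_eq_pow_mul_and_not_dvd hm q hq.ne_one
  have hc0 : c ≠ 0 := by rintro rfl; simp at hc
  have hcop : Nat.Coprime q c := (Nat.Prime.coprime_iff_not_dvd hq).mpr hc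
  have hq2 := hq.two_le
  rcases a with _ | a
  · simp at hd; exact absurd hd hc
  have e : q ^ (a + 1) * c / q = q ^ a * c := by
    rw [pow_succ, mul_right_comm, Nat.mul_div_cancel _ hq.pos]
  rw [e, ell_coprime (pow_ne_zero _ hq.ne_zero) hc0 (hcop.pow_left _),
    ell_coprime (pow_ne_zero _ hq.ne_zero) hc0 (hcop.pow_left _), ell_prime_pow hq (Nat.succ_ne_zero a)]
  rcases a with _ | a
  · simp only [pow_zero, ell_one, zero_add, pow_one]; omega
  · rw [ell_prime_pow hq (by omega)]
    have : 1 ≤ q ^ a := Nat.one_le_pow _ _ hq.pos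
    have h3 : q ^ (a+1) = q ^ a * q := pow_succ _ _
    have h4 : q ^ (a+1+1) = q ^ a * q * q := by ring
    rw [h3, h4]
    nlinarith [Nat.mul_le_mul this hq2]

theorem ell_mul_pow {m r a : ℕ} (hm : m ≠ 0) (hr : r.Prime) (hd : ¬ r ∣ m) (ha : a ≠ 0) :
    ell (m * r ^ a) = ell m + r ^ a := by
  rw [ell_coprime hm (pow_ne_zero _ hr.ne_zero), ell_prime_pow hr ha]
  exact (((Nat.Prime.coprime_iff_not_dvd hr).mpr hd).symm).pow_right _

/-- Replace a divisor `d` of `g(n)` by powers of two new primes. -/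
theorem exchange {n d r s a b c : ℕ} (hd : d ∣ landau n) (hell : ell (landau n / d) + c ≤ ell (landau n))
    (hr : r.Prime) (hs : s.Prime) (hrs : r ≠ s) (hrd : ¬ r ∣ landau n) (hsd : ¬ s ∣ landau n)
    (ha : a ≠ 0) (hb : b ≠ 0) (hsum : r ^ a + s ^ b ≤ c) : r ^ a * s ^ b ≤ d := by
  obtain ⟨h0, hn⟩ := landau_spec n
  obtain ⟨m, hm⟩ := hd
  have hd0 : d ≠ 0 := by rintro rfl; simp at hm; exact h0 hm
  have hm0 : m ≠ 0 := by rintro rfl; simp at hm; exact h0 hm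
  have hdiv : landau n / d = m := by rw [hm]; exact Nat.mul_div_cancel_left _ (Nat.pos_of_ne_zero hd0)
  rw [hdiv] at hell
  have hrm : ¬ r ∣ m := fun h => hrd (hm ▸ Dvd.dvd.mul_left h d)
  have hsm : ¬ s ∣ m := fun h => hsd (hm ▸ Dvd.dvd.mul_left h d)
  have hsm' : ¬ s ∣ m * r ^ a := by
    intro h
    rcases hs.dvd_mul.mp h with h | h
    · exact hsm h
    · exact hrs ((Nat.prime_dvd_prime_iff_eq hs hr).mp (hs.dvd_of_dvd_pow h)).symm
  have hmr : m * r ^ a ≠ 0 := mul_ne_zero hm0 (pow_ne_zero _ hr.ne_zero)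
  have h1 := le_landau n (m * r ^ a * s ^ b) (mul_ne_zero hmr (pow_ne_zero _ hs.ne_zero)) (by
    rw [ell_mul_pow hmr hs hsm' hb, ell_mul_pow hm0 hr hrm ha]; omega)
  rw [hm] at h1
  have h2 : m * (r ^ a * s ^ b) ≤ m * d := by linarith [mul_comm d m, mul_assoc m (r^a) (s^b)]
  exact Nat.le_of_mul_le_mul_left h2 (Nat.pos_of_ne_zero hm0)

theorem H1 {n q r s : ℕ} (hq : q.Prime) (hqd : q ∣ landau n)
    (hr : r.Prime) (hs : s.Prime) (hrd : ¬ r ∣ landau n) (hsd : ¬ s ∣ landau n)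
    (hrs : r < s) (h : r + s ≤ q) : False := by
  have hr2 := hr.two_le
  have hex : ∃ a, q < r ^ a * s := by
    refine ⟨q, ?_⟩
    have h1 : q < r ^ q := Nat.lt_pow_self (by omega)
    nlinarith
  classical
  obtain ⟨a, ha, hmin⟩ : ∃ a, q < r ^ a * s ∧ ∀ b < a, ¬ q < r ^ b * s :=
    ⟨Nat.find hex, Nat.find_spec hex, fun b hb => Nat.find_min hex hb⟩
  have ha0 : a ≠ 0 := by rintro rfl; simp at ha; omega
  have key : r ^ a + s ≤ q := by
    obtain ⟨b, rfl⟩ := Nat.exists_eq_succ_of_ne_zero ha0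
    rcases b with _ | b
    · simpa using h
    have h1 := hmin (b + 1) (by omega)
    have hne : r ^ (b + 1) * s ≠ q := by
      intro he
      have : r ∣ q := ⟨r ^ b * s, by rw [← he]; ring⟩
      rw [Nat.prime_dvd_prime_iff_eq hr hq] at this
      omega
    have hA : r ≤ r ^ (b + 1) := Nat.le_self_pow (by omega) r
    have e : r ^ (b + 1).succ = r ^ (b + 1) * r := pow_succ _ _
    rw [e]
    generalize r ^ (b + 1) = A at *
    obtain ⟨t, rfl⟩ := Nat.exists_eq_add_of_lt hrs
    have : A * (r + t + 1) + 1 ≤ q := by omega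
    nlinarith [Nat.zero_le (t * (A - r)), Nat.mul_le_mul_left t hA]
  have := exchange hqd (ell_div (landau_spec n).1 hq hqd) hr hs hrs.ne hrd hsd ha0 one_ne_zero
    (by simpa using key)
  simp at this
  omega

theorem H2 {n q r s p : ℕ} (hq : q.Prime) (hqd : q ∣ landau n) (hp : p.Prime) (hpd : p ∣ landau n)
    (hpq : p ≠ q)
    (hr : r.Prime) (hs : s.Prime) (hrd : ¬ r ∣ landau n) (hsd : ¬ s ∣ landau n)
    (hrs : r < s) (h : r + s ≤ q + p) (h2 : q * p ≤ r * s) : False := by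
  have h0 := (landau_spec n).1
  have hcop := (Nat.coprime_primes hp hq).mpr hpq
  have hd : q * p ∣ landau n := hcop.symm.mul_dvd_of_dvd_of_dvd hqd hpd
  have hp' : p ∣ landau n / q := (Nat.dvd_div_iff_mul_dvd hqd).mpr hd
  have h3 : landau n / q ≠ 0 := (Nat.div_pos (Nat.le_of_dvd (Nat.pos_of_ne_zero h0) hqd) hq.pos).ne'
  have e1 := ell_div h0 hq hqd
  have e2 := ell_div h3 hp hp'
  rw [Nat.div_div_eq_div_mul] at e2
  have := exchange hd (c := q + p) (by omega) hr hs hrs.ne hrd hsd one_ne_zero one_ne_zero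
    (by simpa using h)
  simp at this
  have he : q * p = r * s := le_antisymm h2 this
  have : q ∣ r * s := ⟨p, he.symm⟩
  rcases hq.dvd_mul.mp this with h | h
  · rw [Nat.prime_dvd_prime_iff_eq hq hr] at h; exact hrd (h ▸ hqd)
  · rw [Nat.prime_dvd_prime_iff_eq hq hs] at h; exact hsd (h ▸ hqd)

theorem eta_le {k : ℕ} {x : ℝ} {i : ℕ} (h : x < (Nat.nth Nat.Prime (i + k) : ℝ)) :
    eta k x ≤ (Nat.nth Nat.Prime i : ℝ) / (Nat.nth Nat.Prime (i + k) : ℝ) := by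
  apply csInf_le
  · refine ⟨0, ?_⟩
    rintro r ⟨i, -, rfl⟩
    positivity
  · exact ⟨i, h, rfl⟩

theorem eta_small {x : ℝ} (hx : x < 5) : eta 3 x ≤ 3 / 11 := by
  have h1 : Nat.nth Nat.Prime 1 = 3 := by
    have := Nat.nth_count (p := Nat.Prime) (n := 3) (by norm_num)
    rwa [show Nat.count Nat.Prime 3 = 1 by decide] at this
  have h4 : Nat.nth Nat.Prime (1 + 3) = 11 := by
    have := Nat.nth_count (p := Nat.Prime) (n := 11) (by norm_num)
    rwa [show Nat.count Nat.Prime 11 = 4 by decide] at this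
  have := eta_le (k := 3) (x := x) (i := 1) (by rw [h4]; push_cast; linarith)
  rw [h1, h4] at this
  simpa using this

theorem three_primes {η x y : ℝ} (hη : 0 < η) (hη3 : η ≤ eta 3 y) (hy : 5 ≤ y) (hxy : y ≤ x) :
    ∃ a b c : ℕ, a.Prime ∧ b.Prime ∧ c.Prime ∧ a < b ∧ b < c ∧ η * x ≤ a ∧ (c : ℝ) ≤ x := by
  set N := Nat.count Nat.Prime (⌊x⌋₊ + 1) with hN
  have h5 : 5 ≤ ⌊x⌋₊ := Nat.le_floor (by push_cast; linarith)
  have h3 : 3 ≤ N := by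
    have : Nat.count Nat.Prime 6 ≤ N := Nat.count_monotone _ (by omega)
    rwa [show Nat.count Nat.Prime 6 = 3 by decide] at this
  obtain ⟨i, hi⟩ := Nat.exists_eq_add_of_le h3
  have hi' : N = i + 3 := by omega
  have hinf := Nat.infinite_setOfPred_prime
  have hbig : x < (Nat.nth Nat.Prime (i + 3) : ℝ) := by
    have : ⌊x⌋₊ + 1 ≤ Nat.nth Nat.Prime (i + 3) := by
      rw [← Nat.count_le_iff_le_nth hinf]; exact hi'.le
    exact (Nat.lt_floor_add_one x).trans_le (by exact_mod_cast this)
  have hlt : Nat.nth Nat.Prime (i + 2) < ⌊x⌋₊ + 1 := by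
    apply Nat.nth_lt_of_lt_count; rw [← hN]; omega
  refine ⟨Nat.nth Nat.Prime i, Nat.nth Nat.Prime (i+1), Nat.nth Nat.Prime (i+2),
    Nat.prime_nth_prime _, Nat.prime_nth_prime _, Nat.prime_nth_prime _,
    Nat.nth_strictMono hinf (by omega), Nat.nth_strictMono hinf (by omega), ?_, ?_⟩
  · have h := hη3.trans (eta_le (hxy.trans_lt hbig))
    rw [le_div_iff₀ (by linarith)] at h
    nlinarith
  · have : Nat.nth Nat.Prime (i + 2) ≤ ⌊x⌋₊ := by omega
    exact (Nat.le_floor_iff (by linarith)).mp this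

/-- Elementary facts on the uniform g-sequence. -/
theorem gamma_facts {η : ℝ} (hη : 0 < η) (hη1 : η < 1)
    {γ : ℕ → ℝ} (hγ0 : γ 0 = 0) (hγ : ∀ j : ℕ, γ (j + 1) = (1 + η * γ j ^ 2) / 2) :
    Monotone γ ∧ (∀ j, 0 ≤ γ j) ∧ (∀ j, γ j < 1) ∧
    ∀ i j, η * γ i ^ 2 ≤ γ j → γ i ^ 2 ≤ γ (j + 1) := by
  have h0 : ∀ j, 0 ≤ γ j := by
    intro j
    rcases j with _ | j
    · rw [hγ0]
    · rw [hγ]; positivity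
  have hs0 : 0 < √(1 - η) := Real.sqrt_pos.mpr (by linarith)
  have hss : √(1 - η) ^ 2 = 1 - η := Real.sq_sqrt (by linarith)
  set s := √(1 - η) with hs
  have hηs : η = 1 - s ^ 2 := by linarith
  have hs1 : s < 1 := by nlinarith
  have hL : ∀ j, γ j * (1 + s) ≤ 1 := by
    intro j
    induction j with
    | zero => rw [hγ0]; simp
    | succ j ih =>
      rw [hγ, hηs]
      have h1 : (γ j * (1 + s)) ^ 2 ≤ 1 := by
        have := h0 j
        have : 0 ≤ γ j * (1 + s) := by positivity
        nlinarith
      have h2 : (1 - s ^ 2) * γ j ^ 2 * (1 + s) = (1 - s) * (γ j * (1 + s)) ^ 2 := by ring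
      nlinarith
  refine ⟨?_, h0, ?_, ?_⟩
  · apply monotone_nat_of_le_succ
    intro j
    induction j with
    | zero => rw [hγ0]; exact h0 _
    | succ j ih =>
      rw [hγ (j + 1), hγ j]
      rw [hγ j] at ih
      have := h0 j
      have h3 : γ j ^ 2 ≤ ((1 + η * γ j ^ 2) / 2) ^ 2 := by gcongr
      nlinarith
  · intro j
    have := hL j
    have := h0 j
    nlinarith
  · intro i j h
    rw [hγ]
    have hi := h0 i
    have hg := hL i
    set u := γ i ^ 2 with hu
    have hu0 : 0 ≤ u := by positivity
    have hu1 : u * (1 + s) ^ 2 ≤ 1 := by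
      have : 0 ≤ γ i * (1 + s) := by positivity
      have : (γ i * (1 + s)) ^ 2 ≤ 1 := by nlinarith
      rw [hu]; nlinarith
    have h4 : (η * u) ^ 2 ≤ γ j ^ 2 := by gcongr
    have h5 : η * (η * u) ^ 2 ≤ η * γ j ^ 2 := by gcongr
    suffices 2 * u ≤ 1 + η * (η * u) ^ 2 by linarith
    -- decreasing in `u`
    set v := 1 / (1 + s) ^ 2 with hv
    have hv1 : v * (1 + s) ^ 2 = 1 := by rw [hv]; field_simp
    have huv : u ≤ v := by rw [hv, le_div_iff₀ (by positivity)]; exact hu1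
    have hv0 : v ≤ 1 := by nlinarith [sq_nonneg s]
    have h6 : 2 * v ≤ 1 + η * (η * v) ^ 2 := by
      have e : 1 + η * (η * v) ^ 2 - 2 * v = (s ^ 2 + 2 * s ^ 3 - s ^ 4) * v := by
        rw [hv, hηs]; field_simp; ring
      have : 0 ≤ (s ^ 2 + 2 * s ^ 3 - s ^ 4) * v := by
        apply mul_nonneg
        · have : s ^ 2 + 2 * s ^ 3 - s ^ 4 = s ^ 2 * (1 + s * (2 - s)) := by ring
          rw [this]; apply mul_nonneg (by positivity); nlinarith
        · linarith
      linarith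
    have h7 : η ^ 3 ≤ 1 := pow_le_one₀ hη.le hη1.le
    have h8 : 0 ≤ (v - u) * (2 - η ^ 3 * (u + v)) := by
      apply mul_nonneg (by linarith)
      have : η ^ 3 * (u + v) ≤ 1 * 2 := by gcongr; linarith
      linarith
    nlinarith

set_option maxHeartbeats 2000000 in
theorem no_pair {n q : ℕ} (hq : q.Prime) (hqd : q ∣ landau n)
    {η : ℝ} (hη : 0 < η) (hη1 : η < 1) (hη3 : η ≤ eta 3 ((q : ℝ) / 4))
    {γ : ℕ → ℝ} (hγ0 : γ 0 = 0) (hγ : ∀ j : ℕ, γ (j + 1) = (1 + η * γ j ^ 2) / 2) :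
    (∀ r s : ℕ, r.Prime → s.Prime → ¬ r ∣ landau n → ¬ s ∣ landau n → r < s →
      (s : ℝ) ≤ q * γ 2 → False) ∧
    ∀ i, 1 ≤ i → ∀ r s : ℕ, r.Prime → s.Prime → ¬ r ∣ landau n → ¬ s ∣ landau n → r < s →
      q * γ i ≤ r → (s : ℝ) ≤ q * γ (i + 1) → False := by
  obtain ⟨hmono, h0, h1, hkey⟩ := gamma_facts hη hη1 hγ0 hγ
  have hqpos : (0 : ℝ) < q := by exact_mod_cast hq.pos
  have g1 : γ 1 = 1 / 2 := by rw [hγ 0, hγ0]; norm_num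
  have g2 : γ 2 = (1 + η / 4) / 2 := by rw [hγ 1, g1]; ring
  rcases Nat.lt_or_ge q 20 with hq20 | hq20
  · -- small case
    have hqr : (q : ℝ) < 20 := by exact_mod_cast hq20
    have hη' : η ≤ 3 / 11 := hη3.trans (eta_small (by linarith))
    have hb : ∀ j, γ j ≤ 6 / 11 := by
      intro j
      induction j with
      | zero => rw [hγ0]; norm_num
      | succ j ih =>
        rw [hγ]
        have h2 : γ j ^ 2 ≤ (6 / 11) ^ 2 := pow_le_pow_left₀ (h0 j) ih 2
        have : η * γ j ^ 2 ≤ 3 / 11 * (6 / 11) ^ 2 := by gcongr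
        norm_num at this ⊢
        linarith
    have small : ∀ r s j : ℕ, r.Prime → s.Prime → ¬ r ∣ landau n → ¬ s ∣ landau n → r < s →
      (s : ℝ) ≤ q * γ j → False := by
      intro r s j hr hs hrd hsd hrs h
      have h2 : (s : ℝ) ≤ q * (6 / 11) := h.trans (by gcongr; exact hb j)
      have h3 : 11 * s ≤ 6 * q := by
        have : (11 : ℝ) * s ≤ 6 * q := by linarith
        exact_mod_cast this
      refine H1 hq hqd hr hs hrd hsd hrs ?_
      have hs10 : s ≤ 10 := by omega
      by_contra hcon
      push Not at hcon
      have : s ≠ 8 := by rintro rfl; revert hs; decide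
      have : s ≠ 9 := by rintro rfl; revert hs; decide
      have : s ≠ 10 := by rintro rfl; revert hs; decide
      have : s ≠ 6 := by rintro rfl; revert hs; decide
      have : r ≠ 6 := by rintro rfl; revert hr; decide
      have := hr.two_le
      omega
    exact ⟨fun r s hr hs hrd hsd hrs h => small r s 2 hr hs hrd hsd hrs h,
      fun i _ r s hr hs hrd hsd hrs _ h => small r s (i + 1) hr hs hrd hsd hrs h⟩
  · have hqr : (20 : ℝ) ≤ q := by exact_mod_cast hq20
    -- three prime non-divisors
    have step : ∀ i, 1 ≤ i → ∀ r s : ℕ, r.Prime → s.Prime → ¬ r ∣ landau n → ¬ s ∣ landau n → r < s →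
        q * γ i ≤ r → (s : ℝ) ≤ q * γ (i + 1) →
        ∃ a b c : ℕ, a.Prime ∧ b.Prime ∧ c.Prime ∧ a < b ∧ b < c ∧ q * (η * γ i ^ 2) ≤ a ∧
          (c : ℝ) ≤ q * γ i ^ 2 ∧ ¬ a ∣ landau n ∧ ¬ b ∣ landau n ∧ ¬ c ∣ landau n := by
      intro i hi r s hr hs hrd hsd hrs hlo hhi
      have hgi : 1 / 2 ≤ γ i := g1 ▸ hmono hi
      have hgi1 := h1 i
      have hsq4 : 1 / 4 ≤ γ i ^ 2 := by nlinarith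
      have hsq1 : γ i ^ 2 < 1 := by nlinarith
      obtain ⟨a, b, c, ha, hb, hc, hab, hbc, hax, hcx⟩ :=
        three_primes (x := q * γ i ^ 2) hη hη3 (by linarith) (by nlinarith)
      have hrs' : (r : ℝ) < s := by exact_mod_cast hrs
      have hab' : (a : ℝ) < b := by exact_mod_cast hab
      have hbc' : (b : ℝ) < c := by exact_mod_cast hbc
      have nd : ∀ p : ℕ, p.Prime → η * (q * γ i ^ 2) ≤ p → (p : ℝ) ≤ q * γ i ^ 2 →
          ¬ p ∣ landau n := by
        intro p hp hp1 hp2 hpd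
        have hpq : p ≠ q := by
          rintro rfl
          nlinarith
        refine H2 hq hqd hp hpd hpq hr hs hrd hsd hrs ?_ ?_
        · have : (r : ℝ) + s ≤ q + p := by
            rw [hγ] at hhi
            nlinarith
          exact_mod_cast this
        · have h3 : (q * γ i) * (q * γ i) ≤ (r : ℝ) * s := by
            have : 0 ≤ γ i := h0 i
            apply mul_le_mul hlo (hlo.trans hrs'.le) (by positivity) (by positivity)
          have : (q : ℝ) * p ≤ r * s := by nlinarith
          exact_mod_cast this
      refine ⟨a, b, c, ha, hb, hc, hab, hbc, by linarith, hcx, nd a ha hax (by linarith),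
        nd b hb (by linarith) (by linarith), nd c hc (by linarith) hcx⟩
    have P1 : ∀ r s : ℕ, r.Prime → s.Prime → ¬ r ∣ landau n → ¬ s ∣ landau n → r < s →
        q * γ 1 ≤ r → (s : ℝ) ≤ q * γ 2 → False := by
      intro r s hr hs hrd hsd hrs hlo hhi
      obtain ⟨a, b, c, ha, hb, hc, hab, hbc, hax, hcx, had, hbd, hcd⟩ :=
        step 1 le_rfl r s hr hs hrd hsd hrs hlo hhi
      refine H1 hq hqd ha hb had hbd hab ?_
      have hab' : (a : ℝ) < b := by exact_mod_cast hab
      have hbc' : (b : ℝ) < c := by exact_mod_cast hbc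
      have : (a : ℝ) + b ≤ q := by rw [g1] at hcx; linarith
      exact_mod_cast this
    have base : ∀ r s : ℕ, r.Prime → s.Prime → ¬ r ∣ landau n → ¬ s ∣ landau n → r < s →
        (s : ℝ) ≤ q * γ 2 → False := by
      intro r s hr hs hrd hsd hrs hhi
      rcases le_or_gt (q * γ 1) r with hlo | hlo
      · exact P1 r s hr hs hrd hsd hrs hlo hhi
      rcases Nat.lt_or_ge q (r + s) with hsum | hsum
      swap
      · exact H1 hq hqd hr hs hrd hsd hrs hsum
      rw [g1] at hlo
      rw [g2] at hhi
      have hs58 : (s : ℝ) ≤ q * (5 / 8) := hhi.trans (mul_le_mul_of_nonneg_left (by linarith) hqpos.le)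
      have hsum' : (q : ℝ) + 1 ≤ r + s := by exact_mod_cast hsum
      have hr0 : (0 : ℝ) < r := by exact_mod_cast hr.pos
      have hs0 : (0 : ℝ) < s := by exact_mod_cast hs.pos
      have hineq : 2 * q * ((r : ℝ) + s - q) ≤ r * s := by
        have : (q * (3 / 2)) * (q * (11 / 8)) ≤ (2 * (q : ℝ) - r) * (2 * q - s) :=
          mul_le_mul (by linarith) (by linarith) (by positivity) (by linarith)
        nlinarith
      set x : ℝ := r * s / q with hx
      have hxq : x * q = r * s := by rw [hx]; field_simp
      have hx2 : 2 * ((r : ℝ) + s - q) ≤ x := by rw [hx, le_div_iff₀ hqpos]; linarith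
      have hx3 : 1 ≤ x / 2 := by linarith
      have hfl : ⌊x / 2⌋₊ ≠ 0 := by
        have : 1 ≤ ⌊x / 2⌋₊ := Nat.le_floor (by simpa using hx3)
        omega
      obtain ⟨p, hp, hp1, hp2⟩ := Nat.exists_prime_lt_and_le_two_mul _ hfl
      have hp1' : x / 2 < p := (Nat.floor_lt (by linarith)).mp hp1
      have hp2' : (p : ℝ) ≤ x := by
        have h4 : ((p : ℕ) : ℝ) ≤ 2 * (⌊x / 2⌋₊ : ℝ) := by exact_mod_cast hp2
        have := Nat.floor_le (a := x / 2) (by linarith)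
        linarith
      have hxr : x < r := by
        rw [hx, div_lt_iff₀ hqpos]
        nlinarith
      by_cases hpd : p ∣ landau n
      · refine H2 hq hqd hp hpd ?_ hr hs hrd hsd hrs ?_ ?_
        · rintro rfl; linarith
        · have : (r : ℝ) + s ≤ q + p := by linarith
          exact_mod_cast this
        · have : (q : ℝ) * p ≤ r * s := by nlinarith
          exact_mod_cast this
      · refine H1 hq hqd hp hr hpd hrd ?_ ?_
        · have : (p : ℝ) < r := by linarith
          exact_mod_cast this
        · have : (p : ℝ) + r ≤ q := by linarith
          exact_mod_cast this
    refine ⟨base, ?_⟩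
    intro i
    induction i using Nat.strong_induction_on with
    | _ i ih =>
    intro hi r s hr hs hrd hsd hrs hlo hhi
    obtain ⟨a, b, c, ha, hb, hc, hab, hbc, hax, hcx, had, hbd, hcd⟩ :=
      step i hi r s hr hs hrd hsd hrs hlo hhi
    have hab' : (a : ℝ) < b := by exact_mod_cast hab
    have hbc' : (b : ℝ) < c := by exact_mod_cast hbc
    have hgi : 1 / 2 ≤ γ i := g1 ▸ hmono hi
    have hgi1 := h1 i
    have hsq : γ i ^ 2 ≤ γ i := by nlinarith
    have hpos : 0 < η * γ i ^ 2 := by positivity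
    have hex : ∃ j, η * γ i ^ 2 ≤ γ j := ⟨i, by nlinarith⟩
    classical
    obtain ⟨j, hj, hmin⟩ : ∃ j, η * γ i ^ 2 ≤ γ j ∧ ∀ l < j, ¬ η * γ i ^ 2 ≤ γ l :=
      ⟨Nat.find hex, Nat.find_spec hex, fun b hb => Nat.find_min hex hb⟩
    have hji : j ≤ i := by
      by_contra hcon
      exact hmin i (by omega) (by nlinarith)
    have hup := hkey i j hj
    have hcup : (c : ℝ) ≤ q * γ (j + 1) := hcx.trans (by gcongr)
    have hj0 : j ≠ 0 := by rintro rfl; rw [hγ0] at hj; linarith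
    rcases Nat.lt_or_ge j 2 with hj2 | hj2
    · have : j = 1 := by omega
      subst this
      exact base a b ha hb had hbd hab (by linarith)
    rcases le_or_gt (b : ℝ) (q * γ j) with hbj | hbj
    · obtain ⟨l, rfl⟩ : ∃ l, j = l + 1 := ⟨j - 1, by omega⟩
      refine ih l (by omega) (by omega) a b ha hb had hbd hab ?_ hbj
      have := hmin l (by omega)
      push Not at this
      refine le_trans ?_ hax
      gcongr
    · have hlt : j < i := by
        rcases Nat.lt_or_ge j i with h | h
        · exact h
        · exfalso
          have : j = i := by omega
          subst this
          have : q * γ j ^ 2 ≤ q * γ j := by gcongr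
          linarith
      exact ih j hlt (by omega) b c hb hc hbd hcd hbc hbj.le hcup

open Classical in
theorem count_nd {n q : ℕ} (hq : q.Prime) (hqd : q ∣ landau n)
    {η : ℝ} (hη : 0 < η) (hη1 : η < 1) (hη3 : η ≤ eta 3 ((q : ℝ) / 4))
    {γ : ℕ → ℝ} (hγ0 : γ 0 = 0) (hγ : ∀ j : ℕ, γ (j + 1) = (1 + η * γ j ^ 2) / 2)
    (k : ℕ) (hk : 1 ≤ k) (S : Finset ℕ)
    (hS : ∀ r ∈ S, r.Prime ∧ ¬ r ∣ landau n ∧ (r : ℝ) ≤ q * γ (k + 1)) : S.card ≤ k := by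
  obtain ⟨hA, hB⟩ := no_pair hq hqd hη hη1 hη3 hγ0 hγ
  induction k, hk using Nat.le_induction generalizing S with
  | base =>
    rw [Finset.card_le_one]
    intro a ha b hb
    obtain ⟨a1, a2, a3⟩ := hS a ha
    obtain ⟨b1, b2, b3⟩ := hS b hb
    by_contra hne
    rcases lt_or_gt_of_ne hne with h | h
    · exact hA a b a1 b1 a2 b2 h b3
    · exact hA b a b1 a1 b2 a2 h a3
  | succ k hk ih =>
    have h1 := ih (S.filter fun r : ℕ => (r : ℝ) ≤ q * γ (k + 1)) (by
      intro r hr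
      rw [Finset.mem_filter] at hr
      exact ⟨(hS r hr.1).1, (hS r hr.1).2.1, hr.2⟩)
    have h2 : (S.filter fun r : ℕ => ¬ (r : ℝ) ≤ q * γ (k + 1)).card ≤ 1 := by
      rw [Finset.card_le_one]
      intro a ha b hb
      rw [Finset.mem_filter, not_le] at ha hb
      obtain ⟨a1, a2, a3⟩ := hS a ha.1
      obtain ⟨b1, b2, b3⟩ := hS b hb.1
      by_contra hne
      rcases lt_or_gt_of_ne hne with h | h
      · exact hB (k + 1) (by omega) a b a1 b1 a2 b2 h ha.2.le b3
      · exact hB (k + 1) (by omega) b a b1 a1 b2 a2 h hb.2.le a3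
    have := Finset.card_filter_add_card_filter_not (s := S) (fun r : ℕ => (r : ℝ) ≤ q * γ (k + 1))
    omega

/-- If q is a prime dividing g(n), η ≤ η₃(q/4), and (γ_j) is the uniform g-sequence
of parameter η, then for every k ≥ 1 with θ(qγ_{k+1})/q − k·(log q)/q > 0 one has
q ≤ log g(n) / (θ(qγ_{k+1})/q − k·(log q)/q). -/
theorem stmt15 (n q : ℕ) (hq : q.Prime) (hqd : q ∣ landau n)
    (η : ℝ) (hη : 0 < η) (hη1 : η < 1) (hη3 : η ≤ eta 3 ((q : ℝ) / 4))
    (γ : ℕ → ℝ) (hγ0 : γ 0 = 0)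
    (hγ : ∀ j : ℕ, 1 ≤ j → γ j = (1 + η * γ (j - 1) ^ 2) / 2)
    (k : ℕ) (hk : 1 ≤ k)
    (hD : 0 < chebTheta ((q : ℝ) * γ (k + 1)) / q - k * (Real.log q / q)) :
    (q : ℝ) ≤ Real.log (landau n) /
      (chebTheta ((q : ℝ) * γ (k + 1)) / q - k * (Real.log q / q)) := by
  classical
  have hγ' : ∀ j : ℕ, γ (j + 1) = (1 + η * γ j ^ 2) / 2 := fun j => by
    simpa using hγ (j + 1) (by omega)
  obtain ⟨-, hnn, hlt1, -⟩ := gamma_facts hη hη1 hγ0 hγ'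
  have hqpos : (0 : ℝ) < q := by exact_mod_cast hq.pos
  have h0 := (landau_spec n).1
  rw [le_div_iff₀ hD]
  have e : (q : ℝ) * (chebTheta ((q : ℝ) * γ (k + 1)) / q - k * (Real.log q / q)) =
      chebTheta ((q : ℝ) * γ (k + 1)) - k * Real.log q := by field_simp
  rw [e]
  have hmem : ∀ p ∈ Finset.filter Nat.Prime (Finset.range (⌊(q : ℝ) * γ (k + 1)⌋₊ + 1)),
      p.Prime ∧ (p : ℝ) ≤ q * γ (k + 1) := by
    intro p hp
    rw [Finset.mem_filter, Finset.mem_range] at hp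
    have := hnn (k + 1)
    exact ⟨hp.2, (Nat.le_floor_iff (by positivity)).mp (by omega)⟩
  unfold chebTheta
  set T := Finset.filter Nat.Prime (Finset.range (⌊(q : ℝ) * γ (k + 1)⌋₊ + 1)) with hT
  rw [← Finset.sum_filter_add_sum_filter_not T (fun p => p ∣ landau n)]
  have hdiv : ∑ p ∈ T.filter (fun p => p ∣ landau n), Real.log p ≤ Real.log (landau n) := by
    rw [← Real.log_prod (fun p hp => by
      have := (hmem p (Finset.mem_filter.mp hp).1).1.ne_zero
      exact_mod_cast this)]
    apply Real.log_le_log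
    · apply Finset.prod_pos
      intro p hp
      exact_mod_cast (hmem p (Finset.mem_filter.mp hp).1).1.pos
    · rw [← Nat.cast_prod]
      norm_cast
      apply Nat.le_of_dvd (Nat.pos_of_ne_zero h0)
      apply Finset.prod_primes_dvd
      · intro p hp
        exact (hmem p (Finset.mem_filter.mp hp).1).1.prime
      · intro p hp
        exact (Finset.mem_filter.mp hp).2
  have hnd : ∑ p ∈ T.filter (fun p => ¬ p ∣ landau n), Real.log p ≤ k * Real.log q := by
    have hcard := count_nd hq hqd hη hη1 hη3 hγ0 hγ' k hk (T.filter (fun p => ¬ p ∣ landau n)) (by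
      intro r hr
      rw [Finset.mem_filter] at hr
      exact ⟨(hmem r hr.1).1, hr.2, (hmem r hr.1).2⟩)
    have hb := Finset.sum_le_card_nsmul (T.filter (fun p => ¬ p ∣ landau n))
      (fun p : ℕ => Real.log p) (Real.log q) (by
        intro p hp
        obtain ⟨h1, h2⟩ := hmem p (Finset.mem_filter.mp hp).1
        apply Real.log_le_log (by exact_mod_cast h1.pos)
        have := hlt1 (k + 1)
        nlinarith)
    rw [nsmul_eq_mul] at hb
    have hlog : 0 ≤ Real.log q := Real.log_natCast_nonneg q
    have hc : (((T.filter (fun p => ¬ p ∣ landau n)).card : ℕ) : ℝ) ≤ k := by exact_mod_cast hcard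
    exact hb.trans (by gcongr)
  linarith
end

section
/- Let q ≥ 3 be a prime and let p be the prime immediately preceding q. Then S(q) < 2.13·√p, where S(q) = Σ_{α=2}^{⌊log(2q)/log 2⌋} θ(q^{1/α} + 1). -/
/-- S(q) = Σ_{α=2}^{⌊log(2q)/log 2⌋} θ(q^{1/α} + 1). -/
noncomputable def Sfun (q : ℕ) : ℝ :=
  ∑ a ∈ Finset.Icc 2 ⌊Real.log (2 * q) / Real.log 2⌋₊,
    chebTheta ((q : ℝ) ^ ((1 : ℝ) / a) + 1)

/-- Chain of primes, consecutive ones close enough for the finite check. -/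
def chainL : List ℕ := [2, 5, 11, 13, 23, 31, 61, 97, 139, 251, 479, 953,
  1759, 3517, 7027, 14051, 22193, 33487, 53359, 87013, 145903, 256033, 466483, 881711,
  1695191, 3307939, 6385619, 12652229, 25304417, 50608829, 101217631, 202435231, 404870461, 809740891, 1619481769]

/-- A computable over-approximation of primality. -/
def isP (n : ℕ) : Bool :=
  [2, 3, 5, 7, 11, 13].all (fun d => n % d != 0 || n == d)

/-- Upper bound for the primorial, by recursion. -/
def prim : ℕ → ℕ
  | 0 => 1
  | (n + 1) => if n + 1 ≠ 1 ∧ isP (n + 1) = true then (n + 1) * prim n else prim n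

/-- Upper bound for the primorial. -/
def primT (m : ℕ) : ℕ := if m < 150 then prim m else 4 ^ m

/-- Bitwise integer root (largest `r < 2 ^ b` above the start value with `r ^ a ≤ n`). -/
def rootB (a n : ℕ) : ℕ → ℕ → ℕ
  | 0, r => r
  | (b + 1), r => if (r + 2 ^ b) ^ a ≤ n then rootB a n b (r + 2 ^ b) else rootB a n b r

/-- Product of primorial bounds for `α = 2, …, k + 1`. -/
def prodT (q : ℕ) : ℕ → ℕ
  | 0 => 1
  | (k + 1) => primT (rootB (k + 2) q 21 0 + 1) * prodT q k

/-- Check that all roots are correct. -/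
def rootsOk (q : ℕ) : ℕ → Bool
  | 0 => true
  | (k + 1) => decide (q < (rootB (k + 2) q 21 0 + 1) ^ (k + 2)) && rootsOk q k

/-- Binary length, searching down from the given bound. -/
def bitLen (q : ℕ) : ℕ → ℕ
  | 0 => 1
  | (k + 1) => if 2 ^ k ≤ q then k + 1 else bitLen q k

/-- The check with a given denominator. -/
def okD (D P Q : ℕ) : Bool :=
  let r := rootB 2 (45369 * P * D * D / 10000) 28 0
  let K := bitLen Q 32
  decide (Q < 2 ^ K) && decide (1 ≤ K) && decide (0 < D) && rootsOk Q (K - 1)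
    && decide (r ^ 2 ≤ 45369 * P * D * D / 10000) && decide (0 < r)
    && decide ((prodT Q (K - 1)) ^ D * 1001 ^ r ≤ 2721 ^ r)

/-- Check of one step. -/
def okStep (P Q : ℕ) : Bool := okD (if P < 1000 then 1000 else 10) P Q

/-- Check of all steps. -/
def okChain : List ℕ → Bool
  | [] => true
  | [_] => true
  | (a :: b :: l) => okStep a b && okChain (b :: l)

set_option maxRecDepth 100000 in
set_option exponentiation.threshold 10000000 in
theorem okChain_chainL : okChain chainL = true := by
  simp only [chainL, okChain, Bool.and_eq_true, and_true]
  refine ⟨?_, ?_, ?_, ?_, ?_, ?_, ?_, ?_, ?_, ?_, ?_, ?_, ?_, ?_, ?_, ?_, ?_, ?_, ?_, ?_,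
    ?_, ?_, ?_, ?_, ?_, ?_, ?_, ?_, ?_, ?_, ?_, ?_, ?_, ?_⟩ <;> decide +kernel

/-- No divisor of `n` among `lo, …, lo + 2 ^ k - 1`. -/
def noDiv (n : ℕ) : ℕ → ℕ → Bool
  | 0, lo => Nat.blt 0 (n % lo)
  | (k + 1), lo => noDiv n k lo && noDiv n k (lo + 2 ^ k)

theorem noDiv_spec (n k lo d : ℕ) (h : noDiv n k lo = true) (h1 : lo ≤ d) (h2 : d < lo + 2 ^ k) :
    ¬ d ∣ n := by
  induction k generalizing lo with
  | zero =>
    have : d = lo := by simp at h2; omega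
    subst this
    simp only [noDiv, Nat.blt_eq] at h
    intro hd
    have := Nat.mod_eq_zero_of_dvd hd
    omega
  | succ k ih =>
    rw [noDiv, Bool.and_eq_true] at h
    rw [pow_succ] at h2
    by_cases hd : d < lo + 2 ^ k
    · exact ih lo h.1 h1 hd
    · exact ih _ h.2 (by omega) (by omega)

theorem prime_of_noDiv (n k : ℕ) (hn : 2 ≤ n) (hk : n < (2 + 2 ^ k) ^ 2)
    (h : noDiv n k 2 = true) : n.Prime := by
  by_contra hc
  have h1 := Nat.minFac_sq_le_self (by omega) hc
  have h2 : n.minFac < 2 + 2 ^ k := lt_of_pow_lt_pow_left₀ 2 (by positivity) (h1.trans_lt hk)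
  exact noDiv_spec n k 2 _ h (Nat.minFac_prime (by omega)).two_le h2 (Nat.minFac_dvd n)

theorem prime_chainL : ∀ x ∈ chainL, Nat.Prime x := by
  unfold chainL
  simp only [List.forall_mem_cons, List.not_mem_nil, false_imp_iff, implies_true, and_true]
  refine ⟨by norm_num,
    by norm_num,
    by norm_num,
    by norm_num,
    by norm_num,
    by norm_num,
    by norm_num,
    by norm_num,
    by norm_num,
    by norm_num,
    by norm_num,
    by norm_num,
    by norm_num,
    by norm_num,
    by norm_num,
    by norm_num,
    by norm_num,
    by norm_num,
    by norm_num,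
    by norm_num,
    prime_of_noDiv _ 9 (by norm_num) (by norm_num) (by decide +kernel),
    prime_of_noDiv _ 9 (by norm_num) (by norm_num) (by decide +kernel),
    prime_of_noDiv _ 10 (by norm_num) (by norm_num) (by decide +kernel),
    prime_of_noDiv _ 10 (by norm_num) (by norm_num) (by decide +kernel),
    prime_of_noDiv _ 11 (by norm_num) (by norm_num) (by decide +kernel),
    prime_of_noDiv _ 11 (by norm_num) (by norm_num) (by decide +kernel),
    prime_of_noDiv _ 12 (by norm_num) (by norm_num) (by decide +kernel),
    prime_of_noDiv _ 12 (by norm_num) (by norm_num) (by decide +kernel),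
    prime_of_noDiv _ 13 (by norm_num) (by norm_num) (by decide +kernel),
    prime_of_noDiv _ 13 (by norm_num) (by norm_num) (by decide +kernel),
    prime_of_noDiv _ 14 (by norm_num) (by norm_num) (by decide +kernel),
    prime_of_noDiv _ 14 (by norm_num) (by norm_num) (by decide +kernel),
    prime_of_noDiv _ 15 (by norm_num) (by norm_num) (by decide +kernel),
    prime_of_noDiv _ 15 (by norm_num) (by norm_num) (by decide +kernel),
    prime_of_noDiv _ 16 (by norm_num) (by norm_num) (by decide +kernel)⟩

theorem isP_of_prime {n : ℕ} (h : n.Prime) : isP n = true := by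
  unfold isP
  rw [List.all_eq_true]
  intro d hd
  have hd1 : d ≠ 1 := by
    rintro rfl
    simp at hd
  by_cases h0 : n % d = 0
  · have := (Nat.dvd_prime h).1 (Nat.dvd_of_mod_eq_zero h0)
    simp; right; tauto
  · simp [h0]

theorem primorial_le_prim (n : ℕ) : primorial n ≤ prim n := by
  induction n with
  | zero => simp [prim, primorial, Finset.filter_singleton, Nat.not_prime_zero]
  | succ n ih =>
    rw [prim]
    by_cases h : (n + 1).Prime
    · have h1 : primorial (n + 1) = (n + 1) * primorial n := by
        unfold primorial
        rw [Finset.range_add_one (n := n + 1), Finset.filter_insert, if_pos h,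
          Finset.prod_insert (by simp)]
      rw [if_pos ⟨h.ne_one, isP_of_prime h⟩, h1]
      exact Nat.mul_le_mul_left _ ih
    · have h1 : primorial (n + 1) = primorial n := by
        unfold primorial
        rw [Finset.range_add_one (n := n + 1), Finset.filter_insert, if_neg h]
      rw [h1]
      split_ifs
      · exact ih.trans (Nat.le_mul_of_pos_left _ (Nat.succ_pos _))
      · exact ih

theorem primorial_le_primT (n : ℕ) : primorial n ≤ primT n := by
  unfold primT
  split_ifs
  · exact primorial_le_prim n
  · exact primorial_le_four_pow n

theorem chebTheta_eq (x : ℝ) : chebTheta x = Real.log (primorial ⌊x⌋₊) := by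
  unfold chebTheta primorial
  push_cast
  rw [Real.log_prod]
  intro p hp
  have := (Finset.mem_filter.1 hp).2.ne_zero
  exact_mod_cast this

theorem primT_pos (n : ℕ) : 0 < primT n := lt_of_lt_of_le (primorial_pos n) (primorial_le_primT n)

theorem chebTheta_nonneg (x : ℝ) : 0 ≤ chebTheta x := by
  rw [chebTheta_eq]
  exact Real.log_natCast_nonneg _

theorem chebTheta_le {x : ℝ} {m : ℕ} (h : x < m + 1) : chebTheta x ≤ Real.log (primT m) := by
  rw [chebTheta_eq]
  apply Real.log_le_log
  · exact_mod_cast primorial_pos _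
  · have h1 : ⌊x⌋₊ ≤ m := by
      rw [← Nat.lt_succ_iff]
      exact (Nat.floor_lt' (by simp)).2 (by push_cast; exact h)
    exact_mod_cast (primorial_mono h1).trans (primorial_le_primT m)

theorem chebTheta_le_log4 {x : ℝ} (hx : 0 ≤ x) : chebTheta x ≤ Real.log 4 * x := by
  have := Chebyshev.theta_le_log4_mul_x hx
  rwa [Chebyshev.theta_eq_log_primorial, ← chebTheta_eq] at this

theorem K_le {q K : ℕ} (hq : 0 < q) (h : q < 2 ^ K) :
    ⌊Real.log (2 * q) / Real.log 2⌋₊ ≤ K := by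
  have h2 : (0:ℝ) < Real.log 2 := Real.log_pos (by norm_num)
  have : Real.log (2 * q) / Real.log 2 < (K + 1 : ℕ) := by
    rw [div_lt_iff₀ h2, ← Real.log_pow]
    apply Real.log_lt_log (by positivity)
    rw [pow_succ]
    have : (q : ℝ) < 2 ^ K := by exact_mod_cast h
    linarith
  exact Nat.lt_succ_iff.1 ((Nat.floor_lt' (by simp)).2 this)

theorem prodT_pos (q k : ℕ) : 0 < prodT q k := by
  induction k with
  | zero => simp [prodT]
  | succ k ih => exact Nat.mul_pos (primT_pos _) ih

theorem sum_le_prodT {q Q : ℕ} (hqQ : q ≤ Q) (k : ℕ) (h : rootsOk Q k = true) :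
    ∑ a ∈ Finset.Icc 2 (k + 1), chebTheta ((q : ℝ) ^ ((1 : ℝ) / a) + 1)
      ≤ Real.log (prodT Q k) := by
  induction k with
  | zero => simp [prodT]
  | succ k ih =>
    rw [rootsOk, Bool.and_eq_true, decide_eq_true_eq] at h
    have ih := ih h.2
    rw [Finset.sum_Icc_succ_top (by omega), prodT]
    push_cast
    rw [Real.log_mul (by exact_mod_cast (primT_pos _).ne') (by exact_mod_cast (prodT_pos _ _).ne')]
    have h3 : chebTheta ((q : ℝ) ^ ((1 : ℝ) / ((k:ℝ) + 1 + 1)) + 1) ≤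
        Real.log (primT (rootB (k + 2) Q 21 0 + 1)) := by
      apply chebTheta_le
      have h1 := h.1
      generalize rootB (k + 2) Q 21 0 + 1 = m at h1
      have h4 : (q : ℝ) < (m : ℝ) ^ (k + 2) := by exact_mod_cast hqQ.trans_lt h1
      have h5 : (q : ℝ) ^ ((1 : ℝ) / ((k:ℝ) + 1 + 1)) < m := by
        rw [one_div]
        rw [Real.rpow_inv_lt_iff_of_pos (by positivity) (by positivity) (by positivity)]
        have : ((k:ℝ) + 1 + 1) = ((k + 2 : ℕ) : ℝ) := by push_cast; ring
        rw [this, Real.rpow_natCast]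
        exact h4
      linarith
    linarith

theorem Sfun_le_sum {q K : ℕ} (hq : 0 < q) (h : q < 2 ^ K) :
    Sfun q ≤ ∑ a ∈ Finset.Icc 2 K, chebTheta ((q : ℝ) ^ ((1 : ℝ) / a) + 1) := by
  unfold Sfun
  apply Finset.sum_le_sum_of_subset_of_nonneg
  · exact Finset.Icc_subset_Icc_right (K_le hq h)
  · intros
    exact chebTheta_nonneg _

theorem step_of_ok {D P Q q p : ℕ} (h : okD D P Q = true) (hq : 0 < q) (hqQ : q ≤ Q)
    (hp : P ≤ p) : Sfun q < 2.13 * Real.sqrt p := by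
  unfold okD at h
  simp only [Bool.and_eq_true, decide_eq_true_eq] at h
  generalize rootB 2 (45369 * P * D * D / 10000) 28 0 = r at h
  generalize bitLen Q 32 = K at h
  obtain ⟨⟨⟨⟨⟨⟨h1, h2⟩, h3⟩, h4⟩, h5⟩, h6⟩, h7⟩ := h
  obtain ⟨k, rfl⟩ : ∃ k, K = k + 1 := ⟨K - 1, by omega⟩
  rw [Nat.add_sub_cancel] at h4 h7
  have hS := (Sfun_le_sum hq (hqQ.trans_lt h1)).trans (sum_le_prodT hqQ k h4)
  have hD : (0:ℝ) < D := by exact_mod_cast h3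
  have hN : (0:ℝ) < prodT Q k := by exact_mod_cast prodT_pos Q k
  have hr : (r : ℝ) ≤ 2.13 * Real.sqrt p * D := by
    have h8 : r ^ 2 * 10000 ≤ 45369 * P * D * D :=
      (Nat.mul_le_mul_right _ h5).trans (Nat.div_mul_le_self _ _)
    have h9 : (r : ℝ) ^ 2 * 10000 ≤ 45369 * P * D * D := by exact_mod_cast h8
    have hPp : (P : ℝ) ≤ p := by exact_mod_cast hp
    have hs := Real.sq_sqrt (Nat.cast_nonneg (α := ℝ) p)
    refine (sq_le_sq₀ (by positivity) (by positivity)).1 ?_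
    rw [mul_pow, mul_pow, hs]
    have : (P:ℝ) * (D * D) ≤ p * (D * D) := mul_le_mul_of_nonneg_right hPp (by positivity)
    nlinarith
  have hlog : (D : ℝ) * Real.log (prodT Q k) < r := by
    have h10 : ((prodT Q k : ℝ)) ^ D * 1001 ^ r ≤ 2721 ^ r := by exact_mod_cast h7
    have h11 : ((prodT Q k : ℝ)) ^ D ≤ (2721 / 1001) ^ r := by
      rw [div_pow, le_div_iff₀ (by positivity)]
      exact h10
    have h12 : ((2721 : ℝ) / 1001) ^ r < Real.exp 1 ^ r := by
      apply pow_lt_pow_left₀ _ (by norm_num) h6.ne'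
      have := Real.exp_one_gt_d9
      norm_num at this ⊢
      linarith
    rw [← Real.log_pow, Real.log_lt_iff_lt_exp (by positivity)]
    rw [← Real.exp_nat_mul, mul_one] at h12
    exact h11.trans_lt h12
  have : (D:ℝ) * Sfun q < D * (2.13 * Real.sqrt p) := by
    have := mul_le_mul_of_nonneg_left hS hD.le
    linarith
  exact lt_of_mul_lt_mul_left this hD.le

theorem chain_step (l : List ℕ) (a : ℕ) (hl : okChain (a :: l) = true) (q : ℕ) (h1 : a < q)
    (h2 : ∃ b ∈ a :: l, q ≤ b) :
    ∃ P ∈ a :: l, ∃ Q, P < q ∧ q ≤ Q ∧ okStep P Q = true := by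
  induction l generalizing a with
  | nil =>
    simp at h2
    omega
  | cons b l ih =>
    rw [okChain, Bool.and_eq_true] at hl
    by_cases hb : q ≤ b
    · exact ⟨a, by simp, b, h1, hb, hl.1⟩
    · obtain ⟨P, hP, Q, h⟩ := ih b hl.2 (by omega) (by
        obtain ⟨c, hc, hqc⟩ := h2
        rcases List.mem_cons.1 hc with rfl | hc
        · omega
        · exact ⟨c, hc, hqc⟩)
      exact ⟨P, List.mem_cons_of_mem _ hP, Q, h⟩

theorem rpow_le_aux {q : ℝ} (hq : 2 ^ 30 ≤ q) (e : ℝ) (n : ℕ) (hn : (n : ℝ) ≤ 30 * (1 / 2 - e))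
    (he : e ≤ 1 / 2) : q ^ e ≤ Real.sqrt q / 2 ^ n := by
  have hq0 : 0 < q := lt_of_lt_of_le (by positivity) hq
  have h1 : (2:ℝ) ^ n ≤ q ^ (1 / 2 - e) := by
    calc (2:ℝ) ^ n = 2 ^ (n : ℝ) := (Real.rpow_natCast _ _).symm
      _ ≤ 2 ^ (((30 : ℕ) : ℝ) * (1 / 2 - e)) :=
        Real.rpow_le_rpow_of_exponent_le (by norm_num) (by push_cast; exact hn)
      _ = (2 ^ 30) ^ (1 / 2 - e) := by
        rw [Real.rpow_mul (by norm_num), Real.rpow_natCast]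
      _ ≤ _ := Real.rpow_le_rpow (by positivity) hq (by linarith)
  rw [le_div_iff₀ (by positivity), Real.sqrt_eq_rpow]
  calc q ^ e * 2 ^ n ≤ q ^ e * q ^ (1 / 2 - e) :=
        mul_le_mul_of_nonneg_left h1 (by positivity)
    _ = _ := by rw [← Real.rpow_add hq0]; congr 1; ring

theorem large_case {q p : ℕ} (hq : 2 ^ 30 ≤ q) (hqp : q ≤ 2 * p) :
    Sfun q < 2.13 * Real.sqrt p := by
  have hqR : (2:ℝ) ^ 30 ≤ q := by exact_mod_cast hq
  have hq0 : (0:ℝ) < q := lt_of_lt_of_le (by positivity) hqR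
  set s := Real.sqrt q with hs
  have hs0 : 0 < s := Real.sqrt_pos.2 hq0
  set K := Nat.log 2 q + 1 with hK
  have hlt : q < 2 ^ K := Nat.lt_pow_succ_log_self (by norm_num) q
  have hle : 2 ^ (K - 1) ≤ q := Nat.pow_log_le_self 2 (by omega)
  have hK31 : 31 ≤ K := by
    by_contra hcon
    have : (2:ℕ) ^ K ≤ 2 ^ 30 := Nat.pow_le_pow_right (by norm_num) (by omega)
    omega
  have hS := Sfun_le_sum (by omega) hlt
  -- bound on K
  have hKb : (K : ℝ) ≤ 31 / 1024 * (q:ℝ) ^ ((1:ℝ) / 3) := by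
    obtain ⟨j, hj⟩ : ∃ j, K = j + 31 := ⟨K - 31, by omega⟩
    have h1 : (2:ℝ) ^ (j + 30) ≤ q := by
      have : K - 1 = j + 30 := by omega
      rw [this] at hle
      exact_mod_cast hle
    have h2 : (1024:ℝ) * (1 + j / 31) ≤ (q:ℝ) ^ ((1:ℝ) / 3) := by
      rw [one_div, Real.le_rpow_inv_iff_of_pos (by positivity) (by positivity) (by positivity)]
      have h3 : ((1:ℝ) + j / 31) ^ 3 ≤ 2 ^ j := by
        have h4 : (1:ℝ) + j / 31 ≤ (1 + 1/31) ^ j := by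
          have := one_add_mul_le_pow (a := (1/31 : ℝ)) (by norm_num) j
          calc (1:ℝ) + j / 31 = 1 + j * (1/31) := by ring
            _ ≤ _ := this
        calc ((1:ℝ) + j / 31) ^ 3 ≤ ((1 + 1/31) ^ j) ^ 3 := by gcongr
          _ = ((1 + 1/31) ^ 3) ^ j := by rw [← pow_mul, ← pow_mul, mul_comm]
          _ ≤ 2 ^ j := by gcongr; norm_num
      have : (3:ℝ) = ((3:ℕ):ℝ) := by norm_num
      rw [this, Real.rpow_natCast, mul_pow]
      rw [pow_add] at h1
      nlinarith
    rw [hj]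
    push_cast
    linarith
  have e3 : (q:ℝ) ^ ((1:ℝ) / 3) ≤ s / 2 ^ 5 := rpow_le_aux hqR _ _ (by norm_num) (by norm_num)
  have e4 : (q:ℝ) ^ ((1:ℝ) / 4) ≤ s / 2 ^ 7 := rpow_le_aux hqR _ _ (by norm_num) (by norm_num)
  have e5 : (q:ℝ) ^ ((1:ℝ) / 5) ≤ s / 2 ^ 9 := rpow_le_aux hqR _ _ (by norm_num) (by norm_num)
  have e2 : (q:ℝ) ^ ((1:ℝ) / 2) = s := (Real.sqrt_eq_rpow _).symm
  have e36 : (q:ℝ) ^ ((1:ℝ) / 3) * (q:ℝ) ^ ((1:ℝ) / 6) = s := by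
    rw [← Real.rpow_add hq0, ← e2]; norm_num
  have hw : 0 < (q:ℝ) ^ ((1:ℝ) / 6) := by positivity
  have hKw : K * (q:ℝ) ^ ((1:ℝ) / 6) ≤ 31 / 1024 * s := by
    rw [← e36, ← mul_assoc]
    exact mul_le_mul_of_nonneg_right hKb hw.le
  have hq1 : (1:ℝ) ≤ q := le_trans (by norm_num) hqR
  have hsum : ∑ a ∈ Finset.Icc 2 K, chebTheta ((q : ℝ) ^ ((1 : ℝ) / a) + 1) ≤
      Real.log 4 * (s + s / 2 ^ 5 + s / 2 ^ 7 + s / 2 ^ 9 + K * (q:ℝ) ^ ((1:ℝ) / 6) + K) := by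
    have h1 : ∑ a ∈ Finset.Icc 2 K, chebTheta ((q : ℝ) ^ ((1 : ℝ) / a) + 1) ≤
        ∑ a ∈ Finset.Icc 2 K, Real.log 4 * ((q : ℝ) ^ ((1 : ℝ) / a) + 1) :=
      Finset.sum_le_sum fun a _ => chebTheta_le_log4 (by positivity)
    refine h1.trans ?_
    rw [← Finset.mul_sum]
    apply mul_le_mul_of_nonneg_left _ (Real.log_nonneg (by norm_num))
    rw [Finset.sum_add_distrib]
    have h2 : ∑ a ∈ Finset.Icc 2 K, (1:ℝ) ≤ K := by
      simp only [Finset.sum_const, Nat.card_Icc, nsmul_eq_mul, mul_one]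
      exact_mod_cast (by omega : K + 1 - 2 ≤ K)
    have h3 : ∑ a ∈ Finset.Icc 2 K, (q : ℝ) ^ ((1 : ℝ) / a) =
        (q:ℝ) ^ ((1:ℝ) / 2) + (q:ℝ) ^ ((1:ℝ) / 3) + (q:ℝ) ^ ((1:ℝ) / 4) + (q:ℝ) ^ ((1:ℝ) / 5)
        + ∑ a ∈ Finset.Icc 6 K, (q : ℝ) ^ ((1 : ℝ) / a) := by
      have : ∀ m ≤ K, Finset.Icc m K = insert m (Finset.Icc (m + 1) K) := by
        intro m hm
        ext x; simp; omega
      rw [this 2 (by omega), Finset.sum_insert (by simp), this 3 (by omega),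
        Finset.sum_insert (by simp), this 4 (by omega), Finset.sum_insert (by simp),
        this 5 (by omega), Finset.sum_insert (by simp)]
      push_cast
      ring
    have h4 : ∑ a ∈ Finset.Icc 6 K, (q : ℝ) ^ ((1 : ℝ) / a) ≤ K * (q:ℝ) ^ ((1:ℝ) / 6) := by
      calc ∑ a ∈ Finset.Icc 6 K, (q : ℝ) ^ ((1 : ℝ) / a)
          ≤ ∑ a ∈ Finset.Icc 6 K, (q : ℝ) ^ ((1 : ℝ) / 6) := by
            apply Finset.sum_le_sum
            intro a ha
            apply Real.rpow_le_rpow_of_exponent_le hq1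
            have : (6:ℝ) ≤ a := by exact_mod_cast (Finset.mem_Icc.1 ha).1
            exact one_div_le_one_div_of_le (by norm_num) this
        _ ≤ _ := by
            rw [Finset.sum_const, nsmul_eq_mul]
            apply mul_le_mul_of_nonneg_right _ hw.le
            simp only [Nat.card_Icc]
            exact_mod_cast (by omega : K + 1 - 6 ≤ K)
    linarith
  have hl4 : Real.log 4 < 1.3863 := by
    have : Real.log 4 = 2 * Real.log 2 := by
      rw [show (4:ℝ) = 2 ^ 2 by norm_num, Real.log_pow]; norm_num
    rw [this]
    have := Real.log_two_lt_d9
    linarith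
  have hl4' : 0 < Real.log 4 := Real.log_pos (by norm_num)
  have htot : s + s / 2 ^ 5 + s / 2 ^ 7 + s / 2 ^ 9 + K * (q:ℝ) ^ ((1:ℝ) / 6) + K
      ≤ 1.0733 * s := by
    have : (K:ℝ) ≤ 31 / 1024 * (s / 2 ^ 5) := hKb.trans (by linarith)
    linarith
  have hfin : Sfun q ≤ 1.3863 * (1.0733 * s) := by
    refine (hS.trans hsum).trans ?_
    calc _ ≤ Real.log 4 * (1.0733 * s) := mul_le_mul_of_nonneg_left htot hl4'.le
      _ ≤ _ := mul_le_mul_of_nonneg_right hl4.le (by positivity)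
  have hsp : s ≤ 1.4143 * Real.sqrt p := by
    have h1 : (q:ℝ) ≤ 2 * p := by exact_mod_cast hqp
    rw [hs]
    apply Real.sqrt_le_iff.2
    refine ⟨by positivity, ?_⟩
    rw [mul_pow, Real.sq_sqrt (by positivity)]
    have : (0:ℝ) ≤ p := by positivity
    nlinarith
  nlinarith

/-- If q ≥ 3 is prime and p is the prime immediately preceding q, then S(q) < 2.13·√p. -/
theorem stmt18 (q : ℕ) (hq : q.Prime) (hq3 : 3 ≤ q) (p : ℕ) (hp : p.Prime)
    (hpq : p < q) (hmax : ∀ r : ℕ, r.Prime → r < q → r ≤ p) :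
    Sfun q < 2.13 * Real.sqrt p := by
  by_cases hbig : 2 ^ 30 ≤ q
  · apply large_case hbig
    obtain ⟨r, hr, h1, h2⟩ := Nat.exists_prime_lt_and_le_two_mul p hp.ne_zero
    by_contra hcon
    have := hmax r hr (by omega)
    omega
  · obtain ⟨P, hP, Q, h1, h2, h3⟩ := chain_step chainL.tail 2 okChain_chainL q (by omega)
      ⟨1619481769, by simp [chainL], by omega⟩
    exact step_of_ok h3 (by omega) h2 (hmax P (prime_chainL P hP) h1)
end
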